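/- Let E₁, E₂ be nontrivial word equations on n unknowns such that the set of solutions of E₁ of rank n − 1 is different from the set of solutions of E₂ of rank n − 1. Let V₁, …, V_p be a minimal cover, i.e., a family of (n − 1)-dimensional ℚ-linear subspaces of ℚ^n whose union contains the length type of every common solution of E₁ and E₂ of rank n − 1, such that no proper subfamily has this covering property. Then for every i and every L ∈ ℕ^n with L ∈ V_i, the equations E₁ and E₂ have the same set of solutions of rank n − 1 and length type L. -/

import Mathlib

open Polynomial

/-- The characteristic polynomial `P(w)` of a word. -/
noncomputable def wordPoly (w : List ℕ) : Polynomial ℤ :=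
  ∑ i ∈ Finset.range w.length, Polynomial.C (w.getD i 0 : ℤ) * Polynomial.X ^ i

/-- Application of a morphism (given by the images of the unknowns) to a word. -/
def mApply {n : ℕ} {β : Type*} (h : Fin n → List β) (w : List (Fin n)) : List β :=
  (w.map h).flatten

/-- The morphism maps every unknown to a word over the alphabet `A`. -/
def IntoAlph {n : ℕ} (A : Finset ℕ) (h : Fin n → List ℕ) : Prop :=
  ∀ i, ∀ a ∈ h i, a ∈ A

/-- `w` is a product of words from `A`. -/
def InStar (A : Finset (List ℕ)) (w : List ℕ) : Prop :=
  ∃ l : List (List ℕ), (∀ u ∈ l, u ∈ A) ∧ l.flatten = w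

/-- The combinatorial rank of a morphism: the smallest `r` such that there is a set of
`r` words whose products contain all images of the unknowns. -/
noncomputable def mRank {n : ℕ} (h : Fin n → List ℕ) : ℕ :=
  sInf {r | ∃ A : Finset (List ℕ), A.card = r ∧ ∀ i, InStar A (h i)}

/-- The length type of a morphism, as a rational vector. -/
def lenQ {n : ℕ} (h : Fin n → List ℕ) : Fin n → ℚ :=
  fun i => ((h i).length : ℚ)

/-- `|w|_L`: the length of the image of `w` under any morphism of length type `L`. -/
def lenL {n : ℕ} (L : Fin n → ℕ) (w : List (Fin n)) : ℕ :=
  (w.map L).sum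

/-- The polynomial `Q_{E,x,L}` for the word equation `u = v`, the unknown `x` and the
length type `L`. -/
noncomputable def eqPoly {n : ℕ} (u v : List (Fin n)) (x : Fin n) (L : Fin n → ℕ) :
    Polynomial ℤ :=
  (∑ i ∈ Finset.range u.length,
      if u.getD i x = x then (Polynomial.X : Polynomial ℤ) ^ lenL L (u.take i) else 0)
    - ∑ i ∈ Finset.range v.length,
      if v.getD i x = x then (Polynomial.X : Polynomial ℤ) ^ lenL L (v.take i) else 0

/-- Embedding of `ℤ[X]` into the field `ℚ(X)` of rational functions. -/
noncomputable def toRF (p : Polynomial ℤ) : RatFunc ℚ :=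
  algebraMap (Polynomial ℚ) (RatFunc ℚ) (p.map (Int.castRingHom ℚ))

/-!
Let `k` be a common solution of rank `n - 1` whose length type lies in `W` but in no other member
of the cover. As `k` solves a nontrivial equation, it factors as `k = g ∘ t` through `n - 1`
unknowns, and since its rank is `n - 1`, the morphism `t` itself solves both equations. Hence so
does `g' ∘ t` for every `g'`, and those of rank `n - 1` have covered length types; these are so
many that `W` must be the whole range of the linear map `l ↦ (|t(x)|_l)` induced by `t`.

If `L` lies in this range, say `L = (|t(x)|_l)`, then for words coded as power series in `X` an
equation becomes a linear condition over a field containing all `X ^ q` with `q` rational. For a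
morphism of rank `n - 1` at most one length is zero, which makes the condition nontrivial, so its
solution space has dimension `n - 1`. It contains the image of the (injective) Fox Jacobian of `t`
at the weights `X ^ l(y)`, so it is equal to that image, which does not depend on the equation.
-/

/-! ### Morphisms and their composition -/

section Morphisms

variable {k m n : ℕ} {β : Type*}

@[simp] theorem mApply_nil (h : Fin n → List β) : mApply h [] = [] := rfl

@[simp] theorem mApply_cons (h : Fin n → List β) (x : Fin n) (w : List (Fin n)) :
    mApply h (x :: w) = h x ++ mApply h w := by
  simp [mApply]

theorem mApply_append (h : Fin n → List β) (u v : List (Fin n)) :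
    mApply h (u ++ v) = mApply h u ++ mApply h v := by
  simp [mApply]

/-- The composition `g ∘ t` of two morphisms, each given by the images of its unknowns. -/
def mComp (g : Fin m → List β) (t : Fin n → List (Fin m)) : Fin n → List β :=
  fun x => mApply g (t x)

theorem mApply_mComp (g : Fin m → List β) (t : Fin n → List (Fin m)) (w : List (Fin n)) :
    mApply (mComp g t) w = mApply g (mApply t w) := by
  induction w with
  | nil => rfl
  | cons x w ih => simp [mApply_append, ih, mComp]

theorem mComp_assoc (g : Fin m → List β) (t : Fin n → List (Fin m)) (s : Fin k → List (Fin n)) :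
    mComp (mComp g t) s = mComp g (mComp t s) :=
  funext fun x => mApply_mComp g t (s x)

theorem mApply_mComp_eq_of_eq (g : Fin m → List β) {t : Fin n → List (Fin m)}
    {u v : List (Fin n)} (h : mApply t u = mApply t v) :
    mApply (mComp g t) u = mApply (mComp g t) v := by
  rw [mApply_mComp, mApply_mComp, h]

theorem intoAlph_mComp {A : Finset ℕ} {g : Fin m → List ℕ} (hg : IntoAlph A g)
    (t : Fin n → List (Fin m)) : IntoAlph A (mComp g t) := by
  intro x a ha
  obtain ⟨_, hw, ha⟩ := List.mem_flatten.mp ha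
  obtain ⟨y, _, rfl⟩ := List.mem_map.mp hw
  exact hg y a ha

end Morphisms

theorem exists_common_prefix_of_ne {α : Type*} : ∀ {u v : List α}, u ≠ v →
    ∃ p u' v', u = p ++ u' ∧ v = p ++ v' ∧ u'.head? ≠ v'.head?
  | [], [], h => absurd rfl h
  | [], y :: z, _ => ⟨[], [], y :: z, rfl, rfl, by simp⟩
  | x :: w, [], _ => ⟨[], x :: w, [], rfl, rfl, by simp⟩
  | x :: w, y :: z, h => by
    by_cases hxy : x = y
    · subst hxy
      obtain ⟨p, u', v', rfl, rfl, hne⟩ :=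
        exists_common_prefix_of_ne (fun hwz : w = z => h (hwz ▸ rfl))
      exact ⟨x :: p, u', v', rfl, rfl, hne⟩
    · exact ⟨[], x :: w, y :: z, rfl, rfl, by simpa using hxy⟩

/-! ### Fox derivatives -/

section Fox

variable {ι κ K : Type*}

/-- The total Fox derivative of the word `w` at the weights `z`: the linear functional
`P ↦ ∑ z(p) * P y`, summed over the factorizations `w = p y q` with `y` a letter, where `z(p)` is
the product of the weights of the letters of `p`. Its coefficient at `P y` is the Fox derivative
`∂w/∂y` evaluated at `z`. -/
def foxDeriv [CommSemiring K] (z : ι → K) : List ι → (ι → K) →ₗ[K] K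
  | [] => 0
  | y :: w => LinearMap.proj y + z y • foxDeriv z w

section CommSemiring

variable [CommSemiring K]

@[simp] theorem foxDeriv_nil (z P : ι → K) : foxDeriv z [] P = 0 := rfl

@[simp] theorem foxDeriv_cons (z P : ι → K) (y : ι) (w : List ι) :
    foxDeriv z (y :: w) P = P y + z y * foxDeriv z w P := rfl

theorem foxDeriv_append (z P : ι → K) (u v : List ι) :
    foxDeriv z (u ++ v) P = foxDeriv z u P + (u.map z).prod * foxDeriv z v P := by
  induction u with
  | nil => simp
  | cons y w ih =>
    simp only [List.cons_append, foxDeriv_cons, ih, List.map_cons, List.prod_cons]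
    ring

theorem foxDeriv_one (P : ι → K) (w : List ι) : foxDeriv 1 w P = (w.map P).sum := by
  induction w with
  | nil => simp
  | cons y w ih => simp [ih]

theorem foxDeriv_mApply {n : ℕ} (z P : κ → K) (t : Fin n → List κ) (w : List (Fin n)) :
    foxDeriv z (mApply t w) P
      = foxDeriv (fun x => ((t x).map z).prod) w (fun x => foxDeriv z (t x) P) := by
  induction w with
  | nil => simp
  | cons x w ih => simp [foxDeriv_append, ih]

/-- The Fox Jacobian of the morphism `t` at the weights `z`, as a linear map. -/
def foxJacobian (z : κ → K) (t : ι → List κ) : (κ → K) →ₗ[K] (ι → K) :=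
  LinearMap.pi fun x => foxDeriv z (t x)

@[simp] theorem foxJacobian_apply (z P : κ → K) (t : ι → List κ) (x : ι) :
    foxJacobian z t P x = foxDeriv z (t x) P := rfl

theorem foxJacobian_mComp {m n : ℕ} (z : κ → K) (g : Fin m → List κ) (t : Fin n → List (Fin m)) :
    foxJacobian z (mComp g t)
      = foxJacobian (fun y => ((g y).map z).prod) t ∘ₗ foxJacobian z g :=
  LinearMap.ext fun P => funext fun x => foxDeriv_mApply z P g (t x)

end CommSemiring

/-- A morphism is nondegenerate if its Fox Jacobian is injective at all nonzero weights in all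
fields. (The fields are taken in `Type`, which contains all those needed here.) -/
def IsNondegenerate (t : ι → List κ) : Prop :=
  ∀ (K : Type) [Field K] (z : κ → K), (∀ y, z y ≠ 0) → Function.Injective (foxJacobian z t)

theorem isNondegenerate_mComp {k m n : ℕ} {t : Fin n → List (Fin m)} {s : Fin k → List (Fin n)}
    (ht : IsNondegenerate t) (hs : IsNondegenerate s) : IsNondegenerate (mComp t s) := by
  intro K _ z hz
  rw [foxJacobian_mComp, LinearMap.coe_comp]
  refine (hs K _ fun x => ?_).comp (ht K z hz)
  exact List.prod_ne_zero (by simp [hz])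

theorem range_foxJacobian_eq_ker [Field K] {m : ℕ} {t : Fin (m + 1) → List (Fin m)}
    {z : Fin m → K} (hinj : Function.Injective (foxJacobian z t)) {u v : List (Fin (m + 1))}
    (huv : mApply t u = mApply t v) {z' : Fin (m + 1) → K} (hz' : ∀ x, z' x = ((t x).map z).prod)
    (hne : foxDeriv z' u ≠ foxDeriv z' v) :
    LinearMap.range (foxJacobian z t) = LinearMap.ker (foxDeriv z' u - foxDeriv z' v) := by
  have hle : LinearMap.range (foxJacobian z t) ≤
      LinearMap.ker (foxDeriv z' u - foxDeriv z' v) := by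
    rintro _ ⟨P, rfl⟩
    have happly : ∀ w, foxDeriv z' w (foxJacobian z t P) = foxDeriv z (mApply t w) P := fun w => by
      rw [foxDeriv_mApply, funext hz']
      rfl
    rw [LinearMap.mem_ker, LinearMap.sub_apply, happly, happly, huv, sub_self]
  have hker_lt := Submodule.finrank_lt (mt LinearMap.ker_eq_top.mp (sub_ne_zero.mpr hne))
  rw [Module.finrank_fin_fun] at hker_lt
  refine Submodule.eq_of_le_of_finrank_le hle ?_
  rw [LinearMap.finrank_range_of_inj hinj, Module.finrank_fin_fun]
  exact Nat.lt_succ_iff.mp hker_lt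

end Fox

/-! ### Nondegenerate factorization of solutions -/

section Factorization

variable {m n : ℕ}

/-- The elementary substitution `y ↦ x y`, fixing the other unknowns. -/
def elemSubst (x y : Fin n) : Fin n → List (Fin n) :=
  Function.update (fun i => [i]) y [x, y]

theorem elemSubst_self (x y : Fin n) : elemSubst x y y = [x, y] := by
  simp [elemSubst]

theorem elemSubst_of_ne (x : Fin n) {y i : Fin n} (hi : i ≠ y) : elemSubst x y i = [i] := by
  simp [elemSubst, hi]

theorem mApply_elemSubst_ne_cons {x y : Fin n} (hxy : x ≠ y) (u w : List (Fin n)) :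
    mApply (elemSubst x y) u ≠ y :: w := by
  cases u with
  | nil => simp
  | cons i u =>
    by_cases hi : i = y
    · simp [hi, elemSubst_self, hxy]
    · simp [elemSubst_of_ne x hi, hi]

theorem isNondegenerate_elemSubst {x y : Fin n} (hxy : x ≠ y) :
    IsNondegenerate (elemSubst x y) := by
  intro K _ z hz
  rw [injective_iff_map_eq_zero]
  intro P hP
  have hP_ne : ∀ i, i ≠ y → P i = 0 := fun i hi => by
    simpa [elemSubst_of_ne x hi] using congrFun hP i
  have hP_y : P y = 0 := by
    simpa [elemSubst_self, hP_ne x hxy, hz x] using congrFun hP y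
  funext i
  rcases eq_or_ne i y with rfl | hi
  exacts [hP_y, hP_ne i hi]

theorem mComp_update_elemSubst {β : Type*} {h : Fin n → List β} {x y : Fin n} (hxy : x ≠ y)
    {r : List β} (hr : h y = h x ++ r) : mComp (Function.update h y r) (elemSubst x y) = h := by
  funext i
  rcases eq_or_ne i y with rfl | hi
  · simp [mComp, elemSubst_self, hxy, hr]
  · simp [mComp, elemSubst_of_ne x hi, hi]

theorem sum_length_update_lt {β : Type*} {h : Fin n → List β} {x y : Fin n} {r : List β}
    (hx : h x ≠ []) (hr : h x ++ r = h y) :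
    ∑ i, (Function.update h y r i).length < ∑ i, (h i).length := by
  have hlt : r.length < (h y).length := by
    simpa [← hr] using List.length_pos_iff.mpr hx
  refine Finset.sum_lt_sum (fun i _ => ?_) ⟨y, Finset.mem_univ y, by simpa using hlt⟩
  rcases eq_or_ne i y with rfl | hi
  · simpa using hlt.le
  · simp [hi]

theorem exists_nondegenerate_factorization_of_eq_nil {β : Type*} {h : Fin (m + 1) → List β}
    {x : Fin (m + 1)} (hx : h x = []) :
    ∃ (t : Fin (m + 1) → List (Fin m)) (g : Fin m → List β), h = mComp g t ∧ IsNondegenerate t := by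
  refine ⟨x.insertNth (α := fun _ => List (Fin m)) [] (fun y => [y]), fun y => h (x.succAbove y),
    ?_, ?_⟩
  · rw [funext_iff, Fin.forall_iff_succAbove x]
    exact ⟨by simp [mComp, hx], by simp [mComp]⟩
  · intro K _ z _
    rw [injective_iff_map_eq_zero]
    intro P hP
    funext y
    simpa using congrFun hP (x.succAbove y)

/-- Induction on the total length of the images: a solution without empty images of an equation
that starts with different unknowns `x` and `y` factors through `y ↦ x y` or `x ↦ y x`. -/
theorem exists_nondegenerate_factorization {β : Type*} (h : Fin (m + 1) → List β)
    {u v : List (Fin (m + 1))} (huv : u ≠ v) (heq : mApply h u = mApply h v) :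
    ∃ (t : Fin (m + 1) → List (Fin m)) (g : Fin m → List β), h = mComp g t ∧ IsNondegenerate t := by
  induction hN : ∑ i, (h i).length using Nat.strong_induction_on generalizing h u v with
  | _ N ih =>
  subst hN
  by_cases hnil : ∃ x, h x = []
  · exact exists_nondegenerate_factorization_of_eq_nil hnil.choose_spec
  push Not at hnil
  have of_prefix : ∀ {x y : Fin (m + 1)} {w z : List (Fin (m + 1))}, x ≠ y →
      mApply h (x :: w) = mApply h (y :: z) → h x <+: h y →
      ∃ (t : Fin (m + 1) → List (Fin m)) (g : Fin m → List β),
        h = mComp g t ∧ IsNondegenerate t := by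
    rintro x y w z hxy heq ⟨r, hr⟩
    have hcomp := mComp_update_elemSubst hxy hr.symm
    have hne : mApply (elemSubst x y) (x :: w) ≠ mApply (elemSubst x y) (y :: z) := by
      simpa [elemSubst_of_ne x hxy, elemSubst_self] using mApply_elemSubst_ne_cons hxy w _
    obtain ⟨t, g, htg, ht⟩ := ih _ (sum_length_update_lt (hnil x) hr) _ hne
      (by rwa [← mApply_mComp, ← mApply_mComp, hcomp]) rfl
    exact ⟨mComp t (elemSubst x y), g, by rw [← mComp_assoc, ← htg, hcomp],
      isNondegenerate_mComp ht (isNondegenerate_elemSubst hxy)⟩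
  obtain ⟨p, u', v', rfl, rfl, hhead⟩ := exists_common_prefix_of_ne huv
  rw [mApply_append, mApply_append, List.append_cancel_left_eq] at heq
  match u', v' with
  | [], [] => exact absurd rfl hhead
  | [], y :: z => simp [hnil y] at heq
  | x :: w, [] => simp [hnil x] at heq
  | x :: w, y :: z =>
    have hxy : x ≠ y := by simpa using hhead
    have hx : h x <+: mApply h (x :: w) := by simp
    have hy : h y <+: mApply h (x :: w) := by simp [heq]
    rcases List.prefix_or_prefix_of_prefix hx hy with hpre | hpre
    exacts [of_prefix hxy heq hpre, of_prefix hxy.symm heq.symm hpre]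

end Factorization

/-! ### Combinatorial rank -/

section Rank

variable {m n : ℕ}

theorem mRank_le_card {h : Fin n → List ℕ} {B : Finset (List ℕ)} (hB : ∀ x, InStar B (h x)) :
    mRank h ≤ B.card :=
  Nat.sInf_le ⟨B, rfl, hB⟩

theorem inStar_nil (B : Finset (List ℕ)) : InStar B [] :=
  ⟨[], by simp, rfl⟩

theorem inStar_of_mem {B : Finset (List ℕ)} {w : List ℕ} (hw : w ∈ B) : InStar B w :=
  ⟨[w], by simpa using hw, by simp⟩

theorem inStar_image_mApply (g : Fin m → List ℕ) (w : List (Fin m)) :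
    InStar (Finset.univ.image g) (mApply g w) :=
  ⟨w.map g, by simp, rfl⟩

theorem exists_card_eq_mRank (h : Fin n → List ℕ) :
    ∃ B : Finset (List ℕ), B.card = mRank h ∧ ∀ x, InStar B (h x) :=
  Nat.sInf_mem (s := {r | ∃ B : Finset (List ℕ), B.card = r ∧ ∀ x, InStar B (h x)})
    ⟨_, Finset.univ.image h, rfl, fun x => inStar_of_mem (by simp)⟩

theorem mRank_mComp_le (g : Fin m → List ℕ) (t : Fin n → List (Fin m)) :
    mRank (mComp g t) ≤ m :=
  (mRank_le_card fun x => inStar_image_mApply g (t x)).trans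
    (Finset.card_image_le.trans_eq (Finset.card_fin m))

theorem mRank_le_card_of_intoAlph {A : Finset ℕ} {h : Fin n → List ℕ} (hA : IntoAlph A h) :
    mRank h ≤ A.card := by
  refine (mRank_le_card (B := A.image fun a => [a]) fun x => ?_).trans Finset.card_image_le
  refine ⟨(h x).map fun a => [a], ?_, by simp [← List.flatMap_def]⟩
  simpa using hA x

theorem mRank_le_card_ne_nil (h : Fin n → List ℕ) :
    mRank h ≤ (Finset.univ.filter fun x => h x ≠ []).card := by
  refine (mRank_le_card fun x => ?_).trans
    (Finset.card_image_le (s := Finset.univ.filter fun x => h x ≠ []) (f := h))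
  by_cases hx : h x = []
  · rw [hx]
    exact inStar_nil _
  · exact inStar_of_mem (Finset.mem_image_of_mem h (by simpa using hx))

theorem eq_of_eq_nil_of_mRank_eq {h : Fin (m + 1) → List ℕ} (hr : mRank h = m)
    {x y : Fin (m + 1)} (hx : h x = []) (hy : h y = []) : x = y := by
  have hsum : (Finset.univ.filter fun i => h i = []).card
      + (Finset.univ.filter fun i => h i ≠ []).card = (Finset.univ : Finset (Fin (m + 1))).card :=
    Finset.card_filter_add_card_filter_not _
  have hle := mRank_le_card_ne_nil h
  rw [Finset.card_fin] at hsum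
  have hcard : (Finset.univ.filter fun i => h i = []).card ≤ 1 := by omega
  exact Finset.card_le_one.mp hcard x (by simpa using hx) y (by simpa using hy)

theorem mApply_eq_of_mRank_mComp_eq {g : Fin m → List ℕ} {t : Fin n → List (Fin m)}
    (hr : mRank (mComp g t) = m) {u v : List (Fin n)}
    (heq : mApply (mComp g t) u = mApply (mComp g t) v) : mApply t u = mApply t v := by
  by_contra hne
  rw [mApply_mComp, mApply_mComp] at heq
  cases m with
  | zero => exact hne (Subsingleton.elim _ _)
  | succ m =>
    obtain ⟨t', g', rfl, -⟩ := exists_nondegenerate_factorization g hne heq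
    rw [mComp_assoc] at hr
    have := mRank_mComp_le g' (mComp t' t)
    omega

theorem sum_map_eq_zero_of_inStar {M : Type*} [AddMonoid M] {B : Finset (List ℕ)} {f : ℕ → M}
    (hf : ∀ b ∈ B, (b.map f).sum = 0) {w : List ℕ} (hw : InStar B w) : (w.map f).sum = 0 := by
  obtain ⟨l, hl, rfl⟩ := hw
  rw [List.map_flatten, List.sum_flatten]
  refine List.sum_eq_zero fun a ha => ?_
  simp only [List.map_map, List.mem_map, Function.comp_apply] at ha
  obtain ⟨b, hb, rfl⟩ := ha
  exact hf b (hl b hb)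

theorem finrank_le_mRank {K V : Type*} [Field K] [AddCommGroup V] [Module K V]
    {h : Fin n → List ℕ} (φ : V →ₗ[K] ℕ → K)
    (hφ : ∀ v, (∀ x, ((h x).map (φ v)).sum = 0) → v = 0) : Module.finrank K V ≤ mRank h := by
  obtain ⟨B, hcard, hB⟩ := exists_card_eq_mRank h
  let ψ : V →ₗ[K] B → K := LinearMap.pi fun b => foxDeriv 1 b.1 ∘ₗ φ
  have hψ : Function.Injective ψ := by
    rw [injective_iff_map_eq_zero]
    intro v hv
    have hvB : ∀ b ∈ B, (b.map (φ v)).sum = 0 := fun b hb => by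
      rw [← foxDeriv_one]
      exact congrFun hv ⟨b, hb⟩
    exact hφ v fun x => sum_map_eq_zero_of_inStar hvB (hB x)
  simpa [hcard] using LinearMap.finrank_le_finrank_of_injective hψ

end Rank

/-! ### Length types of the compositions with a nondegenerate morphism -/

section LengthTypes

variable {m n : ℕ}

/-- The linear map `l ↦ (|t(x)|_l)` taking the length type of `g` to that of `g ∘ t`: the Fox
Jacobian of `t` at the weights `1`. -/
def lengthMap (t : Fin n → List (Fin m)) : (Fin m → ℚ) →ₗ[ℚ] (Fin n → ℚ) :=
  foxJacobian 1 t

theorem lengthMap_apply (t : Fin n → List (Fin m)) (l : Fin m → ℚ) (x : Fin n) :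
    lengthMap t l x = ((t x).map l).sum :=
  foxDeriv_one l (t x)

theorem IsNondegenerate.lengthMap_injective {t : Fin n → List (Fin m)} (ht : IsNondegenerate t) :
    Function.Injective (lengthMap t) :=
  ht ℚ 1 fun _ => one_ne_zero

theorem sum_map_mComp {β M : Type*} [AddMonoid M] (f : β → M) (g : Fin m → List β)
    (t : Fin n → List (Fin m)) (x : Fin n) :
    ((mComp g t x).map f).sum = ((t x).map fun y => ((g y).map f).sum).sum := by
  simp [mComp, mApply, List.map_flatten, List.sum_flatten, Function.comp_def]

theorem lenQ_mComp (g : Fin m → List ℕ) (t : Fin n → List (Fin m)) :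
    lenQ (mComp g t) = lengthMap t (lenQ g) := by
  funext x
  have hlength : ((mComp g t x).length : ℚ) = ((t x).map fun y => ((g y).length : ℚ)).sum := by
    simpa using sum_map_mComp (fun _ => (1 : ℚ)) g t x
  exact hlength.trans (lengthMap_apply t (lenQ g) x).symm

theorem mRank_mComp_replicate {t : Fin n → List (Fin m)} (ht : IsNondegenerate t) {c : Fin m → ℕ}
    (hc : Function.Injective c) {p : Fin m → ℕ} (hp : ∀ y, 0 < p y) :
    mRank (mComp (fun y => List.replicate (p y) (c y)) t) = m := by
  refine (mRank_mComp_le _ t).antisymm ?_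
  refine (Module.finrank_fin_fun ℚ).symm.trans_le ?_
  refine finrank_le_mRank (Function.ExtendByZero.linearMap ℚ c) fun v hv => ?_
  have hzero : lengthMap t (fun y => p y * v y) = 0 := by
    funext x
    simpa [sum_map_mComp, lengthMap_apply, hc.extend_apply] using hv x
  funext y
  have hy := congrFun (ht.lengthMap_injective (hzero.trans (map_zero _).symm)) y
  simpa [(hp y).ne'] using hy

theorem IsNondegenerate.exists_lenQ_eq_and_mRank_mComp_eq {t : Fin n → List (Fin m)}
    (ht : IsNondegenerate t) {A : Finset ℕ} (hA : m ≤ A.card) {p : Fin m → ℕ}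
    (hp : ∀ y, 0 < p y) :
    ∃ g, IntoAlph A g ∧ lenQ g = (fun y => (p y : ℚ)) ∧ mRank (mComp g t) = m := by
  let c : Fin m → ℕ := fun y => A.orderEmbOfFin rfl (Fin.castLE hA y)
  have hc : Function.Injective c :=
    (A.orderEmbOfFin rfl).injective.comp (Fin.castLE_injective hA)
  refine ⟨fun y => List.replicate (p y) (c y), fun y a ha => ?_, ?_, mRank_mComp_replicate ht hc hp⟩
  · rw [List.eq_of_mem_replicate ha]
    exact A.orderEmbOfFin_mem rfl _
  · funext y
    simp [lenQ]

end LengthTypes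

section Cover

variable {K V : Type*} [DivisionRing K] [AddCommGroup V] [Module K V]

theorem exists_mem_and_mem_of_infinite {S : Finset (Submodule K V)} {x y : V}
    (hinf : {a : K | ∃ W ∈ S, x + a • y ∈ W}.Infinite) : ∃ W ∈ S, x ∈ W ∧ y ∈ W := by
  by_contra! hS
  refine hinf (Set.Finite.subset (S.finite_toSet.biUnion fun W hW =>
    Set.Subsingleton.finite (s := {a : K | x + a • y ∈ W}) ?_) fun a ha => by simpa using ha)
  intro a ha b hb
  by_contra hab
  have hsub : (a - b) • y ∈ W := by
    have := W.sub_mem ha hb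
    rwa [add_sub_add_left_eq_sub, ← sub_smul] at this
  have hy : y ∈ W := (W.smul_mem_iff (sub_ne_zero.mpr hab)).mp hsub
  exact hS W hW ((W.add_mem_iff_left (W.smul_mem a hy)).mp ha) hy

variable {ι : Type*} [Finite ι]

theorem range_le_of_forall_pos_natCast_mem {f : (ι → K) →ₗ[K] V} {W : Submodule K V}
    (hf : ∀ p : ι → ℕ, (∀ i, 0 < p i) → f (fun i => p i) ∈ W) : LinearMap.range f ≤ W := by
  classical
  have := Fintype.ofFinite ι
  rintro _ ⟨v, rfl⟩
  rw [LinearMap.pi_apply_eq_sum_univ]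
  refine W.sum_mem fun i _ => W.smul_mem _ ?_
  have hdiff := W.sub_mem (hf (fun j => 1 + if i = j then 1 else 0) fun _ => by omega)
    (hf (fun _ => 1) fun _ => Nat.one_pos)
  rw [← map_sub] at hdiff
  convert hdiff using 2
  funext j
  simp

theorem range_le_of_forall_pos_natCast_covered [CharZero K] {f : (ι → K) →ₗ[K] V}
    {S : Finset (Submodule K V)}
    (hcov : ∀ p : ι → ℕ, (∀ i, 0 < p i) → ∃ W ∈ S, f (fun i => p i) ∈ W) {q : ι → ℕ}
    {W : Submodule K V} (hq : ∀ W' ∈ S, f (fun i => q i) ∈ W' → W' = W) :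
    LinearMap.range f ≤ W := by
  refine range_le_of_forall_pos_natCast_mem fun p hp => ?_
  have hcovered (s : ℕ) :
      ((s + 1 : ℕ) : K) ∈ {a : K | ∃ W ∈ S, f (fun i => q i) + a • f (fun i => p i) ∈ W} := by
    obtain ⟨W', hW', hmem⟩ := hcov (fun i => q i + (s + 1) * p i) fun i =>
      Nat.add_pos_right _ (Nat.mul_pos s.succ_pos (hp i))
    refine ⟨W', hW', ?_⟩
    rw [← map_smul, ← map_add]
    convert hmem using 2
    funext i
    simp
  obtain ⟨W', hW', hq', hp'⟩ := exists_mem_and_mem_of_infinite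
    (Set.infinite_of_injective_forall_mem
      (Nat.cast_injective.comp Nat.succ_injective) hcovered)
  exact hq W' hW' hq' ▸ hp'

end Cover

theorem range_lengthMap_le_of_covered {m n : ℕ} {t : Fin n → List (Fin m)}
    (ht : IsNondegenerate t) {A : Finset ℕ} (hA : m ≤ A.card)
    {S : Finset (Submodule ℚ (Fin n → ℚ))}
    (hcov : ∀ g, IntoAlph A g → mRank (mComp g t) = m → ∃ W ∈ S, lenQ (mComp g t) ∈ W)
    {g : Fin m → List ℕ} {W : Submodule ℚ (Fin n → ℚ)}
    (hg : ∀ W' ∈ S, lenQ (mComp g t) ∈ W' → W' = W) : LinearMap.range (lengthMap t) ≤ W := by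
  refine range_le_of_forall_pos_natCast_covered (S := S) (q := fun y => (g y).length)
    (fun p hp => ?_) (lenQ_mComp g t ▸ hg)
  obtain ⟨g', hg'A, hg'p, hg'r⟩ := ht.exists_lenQ_eq_and_mRank_mComp_eq hA hp
  rw [← hg'p, ← lenQ_mComp]
  exact hcov g' hg'A hg'r

/-! ### Solutions of a given length type -/

section Series

variable {ι : Type*}

/-- The weights `X ^ l(i)`, in the field of Hahn series with rational exponents. -/
noncomputable def monomialWeight (l : ι → ℚ) (i : ι) : HahnSeries ℚ ℚ :=
  HahnSeries.single (l i) 1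

theorem monomialWeight_ne_zero (l : ι → ℚ) (i : ι) : monomialWeight l i ≠ 0 :=
  HahnSeries.single_ne_zero one_ne_zero

theorem prod_map_monomialWeight (l : ι → ℚ) (w : List ι) :
    (w.map (monomialWeight l)).prod = HahnSeries.single (w.map l).sum 1 := by
  induction w with
  | nil => simp
  | cons y w ih => simp [ih, monomialWeight]

theorem coeff_foxDeriv_cons (l : ι → ℚ) (P : ι → HahnSeries ℚ ℚ) (y : ι) (w : List ι) (q : ℚ) :
    (foxDeriv (monomialWeight l) (y :: w) P).coeff q
      = (P y).coeff q + (foxDeriv (monomialWeight l) w P).coeff (q - l y) := by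
  simp [monomialWeight, HahnSeries.coeff_single_mul]

variable {l : ι → ℚ}

theorem coeff_foxDeriv_C_of_neg (hl : ∀ i, 0 ≤ l i) (P : ι → ℚ) (w : List ι) {q : ℚ} (hq : q < 0) :
    (foxDeriv (monomialWeight l) w fun i => HahnSeries.C (P i)).coeff q = 0 := by
  induction w generalizing q with
  | nil => simp
  | cons y w ih =>
    rw [coeff_foxDeriv_cons, ih (by linarith [hl y]), HahnSeries.C_apply,
      HahnSeries.coeff_single_of_ne hq.ne, add_zero]

theorem coeff_zero_foxDeriv_C_cons (hl : ∀ i, 0 ≤ l i) (P : ι → ℚ) {y : ι} (hy : 0 < l y)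
    (w : List ι) :
    (foxDeriv (monomialWeight l) (y :: w) fun i => HahnSeries.C (P i)).coeff 0 = P y := by
  rw [coeff_foxDeriv_cons, coeff_foxDeriv_C_of_neg hl P w (by linarith), HahnSeries.C_apply,
    HahnSeries.coeff_single_same, add_zero]

theorem coeff_foxDeriv_C_nonneg {P : ι → ℚ} (hP : ∀ i, 0 ≤ P i) (w : List ι) (q : ℚ) :
    0 ≤ (foxDeriv (monomialWeight l) w fun i => HahnSeries.C (P i)).coeff q := by
  induction w generalizing q with
  | nil => simp
  | cons y w ih =>
    rw [coeff_foxDeriv_cons, HahnSeries.C_apply, HahnSeries.coeff_single]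
    have := ih (q - l y)
    have := hP y
    split_ifs <;> positivity

theorem foxDeriv_monomialWeight_cons_ne (hl : ∀ i, 0 ≤ l i) {x : ι} {w v : List ι}
    (hv : ∀ y ∈ v.head?, y ≠ x ∧ 0 < l y) :
    foxDeriv (monomialWeight l) (x :: w) ≠ foxDeriv (monomialWeight l) v := by
  classical
  intro heq
  let P : ι → ℚ := Pi.single x 1
  have hP : 0 ≤ P := Pi.single_nonneg.mpr zero_le_one
  have hpos : 0 < (foxDeriv (monomialWeight l) (x :: w) fun i => HahnSeries.C (P i)).coeff 0 := by
    have := coeff_foxDeriv_C_nonneg (l := l) hP w (0 - l x)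
    rw [coeff_foxDeriv_cons, HahnSeries.C_apply, HahnSeries.coeff_single_same]
    simp only [P, Pi.single_eq_same] at this ⊢
    linarith
  have hzero : (foxDeriv (monomialWeight l) v fun i => HahnSeries.C (P i)).coeff 0 = 0 := by
    match v with
    | [] => simp
    | y :: z =>
      obtain ⟨hyx, hy⟩ := hv y rfl
      exact (coeff_zero_foxDeriv_C_cons hl P hy z).trans (Pi.single_eq_of_ne hyx 1)
  rw [heq, hzero] at hpos
  exact hpos.false

theorem foxDeriv_monomialWeight_injective (hl : ∀ i, 0 ≤ l i)
    (hzero : ∀ x y, l x = 0 → l y = 0 → x = y) :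
    Function.Injective (foxDeriv (monomialWeight l)) := by
  intro u v heq
  by_contra huv
  obtain ⟨p, u', v', rfl, rfl, hhead⟩ := exists_common_prefix_of_ne huv
  have hp : (p.map (monomialWeight l)).prod ≠ 0 :=
    List.prod_ne_zero (by simp [monomialWeight_ne_zero])
  have heq' : foxDeriv (monomialWeight l) u' = foxDeriv (monomialWeight l) v' := by
    refine LinearMap.ext fun P => mul_left_cancel₀ hp ?_
    simpa only [foxDeriv_append, add_right_inj] using LinearMap.congr_fun heq P
  match u', v' with
  | [], [] => exact hhead rfl
  | [], y :: z => exact foxDeriv_monomialWeight_cons_ne hl (by simp) heq'.symm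
  | x :: w, [] => exact foxDeriv_monomialWeight_cons_ne hl (by simp) heq'
  | x :: w, y :: z =>
    have hxy : x ≠ y := by simpa using hhead
    rcases (hl y).eq_or_lt with hy | hy
    · have hx : 0 < l x := (hl x).lt_of_ne' fun hx => hxy (hzero x y hx hy.symm)
      exact foxDeriv_monomialWeight_cons_ne hl (by simp [hxy, hx]) heq'.symm
    · exact foxDeriv_monomialWeight_cons_ne hl (by simp [hxy.symm, hy]) heq'

/-- The power series `∑ (w_i + 1) X ^ i` coding the word `w`, as a Hahn series. The letters are
shifted by one so that a letter `0` can be told from the end of the word. -/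
noncomputable def wordSeries (w : List ℕ) : HahnSeries ℚ ℚ :=
  foxDeriv (monomialWeight 1) w fun a => HahnSeries.C ((a : ℚ) + 1)

theorem coeff_zero_wordSeries_cons (a : ℕ) (w : List ℕ) :
    (wordSeries (a :: w)).coeff 0 = a + 1 :=
  coeff_zero_foxDeriv_C_cons (fun _ => zero_le_one) (fun a : ℕ => (a : ℚ) + 1) zero_lt_one w

theorem wordSeries_cons_ne_zero (a : ℕ) (w : List ℕ) : wordSeries (a :: w) ≠ 0 := by
  intro h
  have := coeff_zero_wordSeries_cons a w
  rw [h, HahnSeries.coeff_zero] at this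
  exact (Nat.cast_add_one_pos a).ne this

theorem wordSeries_injective : Function.Injective wordSeries := by
  intro u
  induction u with
  | nil =>
    rintro (_ | ⟨b, z⟩) h
    exacts [rfl, absurd h.symm (wordSeries_cons_ne_zero b z)]
  | cons a w ih =>
    rintro (_ | ⟨b, z⟩) h
    · exact absurd h (wordSeries_cons_ne_zero a w)
    obtain rfl : a = b := by
      have := congrArg (fun s => s.coeff 0) h
      simpa [coeff_zero_wordSeries_cons] using this
    have htail : monomialWeight 1 a * wordSeries w = monomialWeight 1 a * wordSeries z :=
      add_left_cancel h
    rw [ih (mul_left_cancel₀ (monomialWeight_ne_zero 1 a) htail)]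

theorem wordSeries_mApply {n : ℕ} (h : Fin n → List ℕ) (w : List (Fin n)) :
    wordSeries (mApply h w) = foxDeriv (monomialWeight (lenQ h)) w (wordSeries ∘ h) := by
  have hweight : (fun x => ((h x).map (monomialWeight 1)).prod) = monomialWeight (lenQ h) := by
    funext x
    simp [prod_map_monomialWeight, monomialWeight, lenQ, Pi.one_def]
  rw [wordSeries, foxDeriv_mApply, hweight]
  rfl

theorem mApply_eq_iff_mem_range_foxJacobian {m : ℕ} {t : Fin (m + 1) → List (Fin m)}
    (ht : IsNondegenerate t) {u v : List (Fin (m + 1))} (huv : u ≠ v)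
    (htuv : mApply t u = mApply t v) {h : Fin (m + 1) → List ℕ} (hr : mRank h = m)
    {l : Fin m → ℚ} (hl : lengthMap t l = lenQ h) :
    mApply h u = mApply h v ↔
      wordSeries ∘ h ∈ LinearMap.range (foxJacobian (monomialWeight l) t) := by
  have hweight : ∀ x, monomialWeight (lenQ h) x = ((t x).map (monomialWeight l)).prod := fun x => by
    rw [prod_map_monomialWeight, ← lengthMap_apply, hl, monomialWeight]
  have hne : foxDeriv (monomialWeight (lenQ h)) u ≠ foxDeriv (monomialWeight (lenQ h)) v :=
    (foxDeriv_monomialWeight_injective (fun x => by simp [lenQ]) fun x y hx hy =>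
      eq_of_eq_nil_of_mRank_eq hr (by simpa [lenQ] using hx) (by simpa [lenQ] using hy)).ne huv
  rw [range_foxJacobian_eq_ker (ht _ _ (monomialWeight_ne_zero l)) htuv hweight hne,
    LinearMap.mem_ker, LinearMap.sub_apply, sub_eq_zero, ← wordSeries_mApply,
    ← wordSeries_mApply, wordSeries_injective.eq_iff]

end Series

/-- Let `E₁, E₂` be nontrivial equations on `n` unknowns whose sets of solutions of rank
`n − 1` differ, and let `S` be a minimal family of `(n − 1)`-dimensional subspaces of `ℚⁿ`
covering the length types of all common solutions of rank `n − 1`. Then for every `W ∈ S`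
and every length type `L ∈ W`, the equations `E₁` and `E₂` have the same solutions of rank
`n − 1` and length type `L`. -/
theorem minimal_cover_same_solutions {n : ℕ}
    (A : Finset ℕ) (hA : ∀ a ∈ A, 0 < a)
    (e₁ e₂ : List (Fin n) × List (Fin n))
    (h₁ : e₁.1 ≠ e₁.2) (h₂ : e₂.1 ≠ e₂.2)
    (hdiff :
      {h : Fin n → List ℕ | IntoAlph A h ∧ mApply h e₁.1 = mApply h e₁.2 ∧ mRank h = n - 1}
        ≠ {h : Fin n → List ℕ | IntoAlph A h ∧ mApply h e₂.1 = mApply h e₂.2 ∧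
            mRank h = n - 1})
    (S : Finset (Submodule ℚ (Fin n → ℚ)))
    (hdim : ∀ W ∈ S, Module.finrank ℚ W = n - 1)
    (hcov : ∀ h : Fin n → List ℕ, IntoAlph A h →
      mApply h e₁.1 = mApply h e₁.2 → mApply h e₂.1 = mApply h e₂.2 →
      mRank h = n - 1 → ∃ W ∈ S, lenQ h ∈ W)
    (hmin : ∀ S' ⊂ S, ¬ (∀ h : Fin n → List ℕ, IntoAlph A h →
      mApply h e₁.1 = mApply h e₁.2 → mApply h e₂.1 = mApply h e₂.2 →
      mRank h = n - 1 → ∃ W ∈ S', lenQ h ∈ W)) :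
    ∀ W ∈ S, ∀ L : Fin n → ℕ, (fun i => (L i : ℚ)) ∈ W →
      ∀ h : Fin n → List ℕ, IntoAlph A h → (∀ i, (h i).length = L i) →
        mRank h = n - 1 →
        (mApply h e₁.1 = mApply h e₁.2 ↔ mApply h e₂.1 = mApply h e₂.2) := by
  cases n with
  | zero => exact absurd (Subsingleton.elim _ _) h₁
  | succ m =>
  intro W hW L hL h _ hhL hr
  have hwitness := hmin (S.erase W) (Finset.erase_ssubset hW)
  push Not at hwitness
  obtain ⟨k, hkA, hk₁, hk₂, hkr, hkW⟩ := hwitness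
  have honly : ∀ W' ∈ S, lenQ k ∈ W' → W' = W := fun W' hW' hk =>
    by_contra fun hne => hkW W' (Finset.mem_erase.mpr ⟨hne, hW'⟩) hk
  have hcard : m ≤ A.card := hkr.symm.trans_le (mRank_le_card_of_intoAlph hkA)
  obtain ⟨t, g, rfl, ht⟩ := exists_nondegenerate_factorization k h₁ hk₁
  have ht₁ : mApply t e₁.1 = mApply t e₁.2 := mApply_eq_of_mRank_mComp_eq hkr hk₁
  have ht₂ : mApply t e₂.1 = mApply t e₂.2 := mApply_eq_of_mRank_mComp_eq hkr hk₂
  have hle : LinearMap.range (lengthMap t) ≤ W := range_lengthMap_le_of_covered ht hcard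
    (fun g' hg' => hcov _ (intoAlph_mComp hg' t) (mApply_mComp_eq_of_eq g' ht₁)
      (mApply_mComp_eq_of_eq g' ht₂)) honly
  have hrange : LinearMap.range (lengthMap t) = W := Submodule.eq_of_le_of_finrank_eq hle <| by
    rw [LinearMap.finrank_range_of_inj ht.lengthMap_injective, hdim W hW, Module.finrank_fin_fun,
      Nat.add_sub_cancel]
  obtain ⟨l, hl⟩ : lenQ h ∈ LinearMap.range (lengthMap t) := by
    rw [hrange]
    convert hL using 2
    rw [lenQ, hhL]
  rw [mApply_eq_iff_mem_range_foxJacobian ht h₁ ht₁ hr hl,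
    mApply_eq_iff_mem_range_foxJacobian ht h₂ ht₂ hr hl]
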